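/- (Mean value theorem for left derivatives.) Let g : [a,b] → ℝ be continuous, and suppose that at every x ∈ (a,b] the left derivative g⁻(x) = lim_{h→0⁺} (g(x) − g(x−h))/h exists. Then there exist points c, d ∈ (a,b] such that g⁻(c) ≤ (g(b) − g(a))/(b − a) ≤ g⁻(d). -/

import Mathlib

open Filter

/-!
Subtracting the chord of slope `m = (g b - g a) / (b - a)` makes the values at `a` and `b` equal,
so the maximum over `[a, b]` is attained somewhere in `(a, b]`. Left difference quotients at a
maximum are nonnegative, so there `g⁻ ≥ m`. The other inequality is the same statement for `-g`.
-/

section LeftDerivative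

open Set Topology

theorem hasDerivWithinAt_Iio_iff_tendsto_inv_smul {E : Type*} [NormedAddCommGroup E]
    [NormedSpace ℝ E] {f : ℝ → E} {f' : E} {x : ℝ} :
    HasDerivWithinAt f f' (Iio x) x ↔
      Tendsto (fun h => h⁻¹ • (f x - f (x - h))) (𝓝[>] 0) (𝓝 f') := by
  have nhdsLT_eq : 𝓝[<] x = map (x - ·) (𝓝[>] 0) := by rw [map_subLeft_nhdsGT, sub_zero]
  have slope_sub (h : ℝ) : slope f x (x - h) = h⁻¹ • (f x - f (x - h)) := by
    rw [slope_comm, slope, sub_sub_cancel, vsub_eq_sub]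
  rw [hasDerivWithinAt_iff_tendsto_slope' self_notMem_Iio, nhdsLT_eq, tendsto_map'_iff]
  simp only [Function.comp_def, slope_sub]

theorem nonneg_of_isLocalMaxOn_Iio_of_hasDerivWithinAt {f : ℝ → ℝ} {f' x : ℝ}
    (hmax : IsLocalMaxOn f (Iio x) x) (hf : HasDerivWithinAt f f' (Iio x) x) : 0 ≤ f' := by
  refine ge_of_tendsto ((hasDerivWithinAt_iff_tendsto_slope' self_notMem_Iio).1 hf) ?_
  filter_upwards [hmax, self_mem_nhdsWithin] with y hle hlt
  rw [slope_def_field]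
  exact div_nonneg_of_nonpos (sub_nonpos.2 hle) (sub_nonpos.2 (le_of_lt hlt))

theorem exists_mem_Ioc_isMaxOn_Icc {α β : Type*} [LinearOrder α] [TopologicalSpace α]
    [CompactIccSpace α] [LinearOrder β] {f : α → β} {a b : α} (hab : a < b)
    (hf : UpperSemicontinuousOn f (Icc a b)) (hfab : f a ≤ f b) :
    ∃ c ∈ Ioc a b, IsMaxOn f (Icc a b) c := by
  obtain ⟨c, hc, hmax⟩ := hf.exists_isMaxOn (nonempty_Icc.2 hab.le) isCompact_Icc
  rcases hc.1.eq_or_lt with rfl | hac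
  · exact ⟨b, right_mem_Ioc.2 hab, fun y hy => (hmax hy).trans hfab⟩
  · exact ⟨c, ⟨hac, hc.2⟩, hmax⟩

variable {f f' : ℝ → ℝ} {a b : ℝ}

theorem exists_hasDerivWithinAt_Iio_nonneg (hab : a < b)
    (hf : UpperSemicontinuousOn f (Icc a b)) (hfab : f a ≤ f b)
    (hf' : ∀ x ∈ Ioc a b, HasDerivWithinAt f (f' x) (Iio x) x) :
    ∃ c ∈ Ioc a b, 0 ≤ f' c := by
  obtain ⟨c, hc, hmax⟩ := exists_mem_Ioc_isMaxOn_Icc hab hf hfab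
  have hlocal : IsLocalMaxOn f (Iio c) c := by
    filter_upwards [Ioo_mem_nhdsLT hc.1] with y hy
    exact hmax ⟨hy.1.le, hy.2.le.trans hc.2⟩
  exact ⟨c, hc, nonneg_of_isLocalMaxOn_Iio_of_hasDerivWithinAt hlocal (hf' c hc)⟩

theorem exists_slope_le_hasDerivWithinAt_Iio (hab : a < b)
    (hf : UpperSemicontinuousOn f (Icc a b))
    (hf' : ∀ x ∈ Ioc a b, HasDerivWithinAt f (f' x) (Iio x) x) :
    ∃ c ∈ Ioc a b, slope f a b ≤ f' c := by
  set m := slope f a b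
  have hchord : (b - a) * m = f b - f a := sub_smul_slope f a b
  have hline (x : ℝ) : HasDerivAt (fun y => -(m * y)) (-m) x := by
    simpa using ((hasDerivAt_id' x).const_mul m).fun_neg
  have husc : UpperSemicontinuousOn (fun y => f y + -(m * y)) (Icc a b) :=
    hf.add (Continuous.continuousOn (by fun_prop)).upperSemicontinuousOn
  obtain ⟨c, hc, hnonneg⟩ := exists_hasDerivWithinAt_Iio_nonneg hab husc (by linarith)
    fun x hx => (hf' x hx).add (hline x).hasDerivWithinAt
  exact ⟨c, hc, by linarith⟩

theorem exists_hasDerivWithinAt_Iio_le_slope (hab : a < b)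
    (hf : LowerSemicontinuousOn f (Icc a b))
    (hf' : ∀ x ∈ Ioc a b, HasDerivWithinAt f (f' x) (Iio x) x) :
    ∃ c ∈ Ioc a b, f' c ≤ slope f a b := by
  have husc : UpperSemicontinuousOn (-f) (Icc a b) :=
    continuous_neg.comp_lowerSemicontinuousOn_antitone hf fun _ _ => neg_le_neg
  obtain ⟨c, hc, hle⟩ := exists_slope_le_hasDerivWithinAt_Iio hab husc fun x hx => (hf' x hx).neg
  rw [slope_neg_fun] at hle
  exact ⟨c, hc, neg_le_neg_iff.1 hle⟩

end LeftDerivative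

/-- **mean value theorem for left derivatives.** Let `g : [a,b] → ℝ` be
continuous, admitting at every `x ∈ (a,b]` a left derivative
`g⁻(x) = lim_{h→0⁺} (g x - g (x - h))/h`.  Then there are `c, d ∈ (a,b]` with
`g⁻(c) ≤ (g b - g a)/(b - a) ≤ g⁻(d)`. -/
theorem mvt_left_deriv (a b : ℝ) (hab : a < b) (g : ℝ → ℝ) (g' : ℝ → ℝ)
    (hcont : ContinuousOn g (Set.Icc a b))
    (hder : ∀ x ∈ Set.Ioc a b,
      Tendsto (fun h => (g x - g (x - h)) / h) (nhdsWithin 0 (Set.Ioi 0)) (nhds (g' x))) :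
    ∃ c ∈ Set.Ioc a b, ∃ d ∈ Set.Ioc a b,
      g' c ≤ (g b - g a) / (b - a) ∧ (g b - g a) / (b - a) ≤ g' d := by
  have hleft (x : ℝ) (hx : x ∈ Set.Ioc a b) : HasDerivWithinAt g (g' x) (Set.Iio x) x := by
    simpa only [hasDerivWithinAt_Iio_iff_tendsto_inv_smul, smul_eq_mul, inv_mul_eq_div]
      using hder x hx
  obtain ⟨c, hc, hcle⟩ :=
    exists_hasDerivWithinAt_Iio_le_slope hab hcont.lowerSemicontinuousOn hleft
  obtain ⟨d, hd, hled⟩ :=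
    exists_slope_le_hasDerivWithinAt_Iio hab hcont.upperSemicontinuousOn hleft
  rw [slope_def_field] at hcle hled
  exact ⟨c, hc, d, hd, hcle, hled⟩
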